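/- Let d ∈ ℕ and let S_d be an order 2 digital (t,d)-sequence over 𝔽_2 whose generating matrices E_i = (e_{i,k,ℓ})_{k,ℓ≥1} satisfy e_{i,k,ℓ} = 0 for all k > 2ℓ and all i ∈ {1,…,d}. There is a constant C depending only on d such that for every N ≥ 2, every j ∈ ℕ_{−1}^d with |j| + t/2 ≥ log₂ N and every m ∈ 𝔻_j: (a) if the interval I_{j,m} contains a point of the first N points of S_d, then |⟨D_{S_d}^N, h_{j,m}⟩| ≤ C · 2^{t/2} · N^{−1} · 2^{−|j|}; (b) the number of m ∈ 𝔻_j for which I_{j,m} contains no point of the first N points of S_d is at least 2^{|j|} − N, and for every such m one has |⟨D_{S_d}^N, h_{j,m}⟩| ≤ C · 2^{−2|j|}. -/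

import Mathlib

open MeasureTheory
open scoped ENNReal

noncomputable section

/-- The closed unit cube `[0,1]^d`. -/
def unitCube (d : ℕ) : Set (Fin d → ℝ) := Set.univ.pi fun _ => Set.Icc (0:ℝ) 1

/-- The half-open unit cube `[0,1)^d`. -/
def unitCubeIco (d : ℕ) : Set (Fin d → ℝ) := Set.univ.pi fun _ => Set.Ico (0:ℝ) 1

/-- Discrepancy function of the first `N` points of the sequence `S` in `[0,1)^d`. -/
def discSeq (d : ℕ) (S : ℕ → Fin d → ℝ) (N : ℕ) (x : Fin d → ℝ) : ℝ :=
  (Nat.card {k : Fin N // ∀ i, S k i < x i} : ℝ) / N - ∏ i, x i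

/-- One-dimensional Haar function `h_{j,m}`, with `h_{-1,0} = 1_{[0,1)}`. -/
def haar1 (j : ℤ) (m : ℕ) (x : ℝ) : ℝ :=
  if j = -1 then (if 0 ≤ x ∧ x < 1 then 1 else 0)
  else if (m:ℝ)/2^j.toNat ≤ x ∧ x < ((m:ℝ) + 1/2)/2^j.toNat then 1
  else if ((m:ℝ) + 1/2)/2^j.toNat ≤ x ∧ x < ((m:ℝ)+1)/2^j.toNat then -1
  else 0

/-- `d`-dimensional (tensor product) Haar function. -/
def haarFn (d : ℕ) (j : Fin d → ℤ) (m : Fin d → ℕ) (x : Fin d → ℝ) : ℝ :=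
  ∏ i, haar1 (j i) (m i) (x i)

/-- Haar coefficient `⟨f, h_{j,m}⟩`. -/
def haarCoeff (d : ℕ) (f : (Fin d → ℝ) → ℝ) (j : Fin d → ℤ) (m : Fin d → ℕ) : ℝ :=
  ∫ x in unitCube d, f x * haarFn d j m x

/-- `|j| = max(j₁,0) + ⋯ + max(j_d,0)`. -/
def jnorm (d : ℕ) (j : Fin d → ℤ) : ℕ := ∑ i, (j i).toNat

/-- One-dimensional dyadic interval `I_{j,m}`. -/
def dyadicI (j : ℤ) (m : ℕ) : Set ℝ :=
  Set.Ico ((m:ℝ)/2^j.toNat) (((m:ℝ)+1)/2^j.toNat)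

/-- `d`-dimensional dyadic box `I_{j,m}`. -/
def dyadicBox (d : ℕ) (j : Fin d → ℤ) (m : Fin d → ℕ) : Set (Fin d → ℝ) :=
  Set.univ.pi fun i => dyadicI (j i) (m i)

/-- The index set `𝔻_j` as a finset. -/
def Dfin (d : ℕ) (j : Fin d → ℤ) : Finset (Fin d → ℕ) :=
  Fintype.piFinset fun i => Finset.range (2 ^ (j i).toNat)

/-- The index set `𝔻_j` for `j ∈ ℕ₀^d`. -/
def Dfin0 (d : ℕ) (j : Fin d → ℕ) : Finset (Fin d → ℕ) :=
  Fintype.piFinset fun i => Finset.range (2 ^ (j i))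

/-- Coordinate of the `k`-th point of a digital sequence over `𝔽₂` with generating
matrix `C` (`0`-based rows and columns). -/
def digitalCoord (C : ℕ → ℕ → ZMod 2) (k : ℕ) : ℝ :=
  ∑' i : ℕ,
    (((∑ ℓ ∈ Finset.range (k+1), C i ℓ * (if k.testBit ℓ then 1 else 0)).val : ℕ) : ℝ) / 2 ^ (i + 1)

/-- The digital sequence over `𝔽₂` generated by matrices `C 0, …, C (d-1)`. -/
def digitalSeq (d : ℕ) (C : Fin d → ℕ → ℕ → ZMod 2) : ℕ → Fin d → ℝ :=
  fun k j => digitalCoord (C j) k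

/-- `C 0, …, C (d-1)` generate an order `α` digital `(t,n,d)`-net over `𝔽₂`,
where the relevant submatrices have `q` rows (`q ≥ αn`) and `n` columns.
Row indices are `0`-based; the `1`-based row value of row `r` is `r+1`. -/
def IsOrderNet (α n t q d : ℕ) (C : Fin d → ℕ → ℕ → ZMod 2) : Prop :=
  ∀ (ν : Fin d → ℕ) (r : ∀ j : Fin d, Fin (ν j) → ℕ),
    (∀ j, StrictAnti (r j)) →
    (∀ j l, r j l < q) →
    (∑ j, ∑ l ∈ Finset.univ.filter (fun l : Fin (ν j) => (l:ℕ) < α), (r j l + 1)) ≤ α * n - t →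
    LinearIndependent (ZMod 2)
      (fun p : Σ j : Fin d, Fin (ν j) => fun col : Fin n => C p.1 (r p.1 p.2) col)

/-- `C 0, …, C (d-1)` generate an order `α` digital `(t,d)`-sequence over `𝔽₂`. -/
def IsOrderSeq (α t d : ℕ) (C : Fin d → ℕ → ℕ → ZMod 2) : Prop :=
  ∀ n : ℕ, t < α * n → IsOrderNet α n t (α * n) d C

/-- The condition `e_{i,k,ℓ} = 0` for all `k > 2ℓ` (in `1`-based indexing). -/
def Triangular2 (d : ℕ) (E : Fin d → ℕ → ℕ → ZMod 2) : Prop :=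
  ∀ i k ℓ, 2 * (ℓ + 1) < k + 1 → E i k ℓ = 0

open scoped Classical in
/-- The quantity `λ(U)⁻¹ ∑_{j ∈ ℕ₀^d} 2^{|j|} ∑_{m : I_{j,m} ⊆ U} ⟨f,h_{j,m}⟩²`. -/
def bmoSq (d : ℕ) (f : (Fin d → ℝ) → ℝ) (U : Set (Fin d → ℝ)) : ℝ≥0∞ :=
  (volume U)⁻¹ * ∑' j : Fin d → ℕ, ∑ m ∈ Dfin0 d j,
    if dyadicBox d (fun i => (j i : ℤ)) m ⊆ U then
      (2:ℝ≥0∞) ^ (∑ i, j i) * ENNReal.ofReal ((haarCoeff d f (fun i => (j i : ℤ)) m)^2)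
    else 0

/-- The BMO (semi-)norm `‖f | bmo^d‖`. -/
def bmoNorm (d : ℕ) (f : (Fin d → ℝ) → ℝ) : ℝ≥0∞ :=
  (⨆ U : {U : Set (Fin d → ℝ) // MeasurableSet U ∧ U ⊆ unitCubeIco d ∧ 0 < volume U},
    bmoSq d f U.1) ^ (1/2 : ℝ)

/-- The Orlicz norm of `f` on `[0,1)^d` with respect to the Young function `ψ`,
with the convention `inf ∅ = ∞`. -/
def orliczNorm (d : ℕ) (ψ : ℝ → ℝ) (f : (Fin d → ℝ) → ℝ) : ℝ≥0∞ :=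
  ⨅ K : {K : ℝ // 0 < K ∧ ∫ x in unitCubeIco d, ψ (|f x| / K) ≤ 1}, ENNReal.ofReal K.1

/-- `ψ` is a Young function which coincides with `exp(x^β) - 1` for all large `x`. -/
def IsYoungExp (β : ℝ) (ψ : ℝ → ℝ) : Prop :=
  ConvexOn ℝ (Set.Ici 0) ψ ∧ ψ 0 = 0 ∧ (∀ x : ℝ, 0 < x → 0 < ψ x) ∧
    ∃ x₀ : ℝ, ∀ x ≥ x₀, ψ x = Real.exp (x ^ β) - 1

/-- The set of valid Haar indices `j ∈ ℕ_{-1}^d`. -/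
def validJ (d : ℕ) : Set (Fin d → ℤ) := {j | ∀ i, -1 ≤ j i}

/-- The `q`-th power of the Haar-characterization of the `S^s_{p,q}B` norm:
`∑_{j ∈ ℕ_{-1}^d} 2^{|j|(s-1/p+1)q} (∑_{m ∈ 𝔻_j} |⟨f,h_{j,m}⟩|^p)^{q/p}`. -/
def besovSum (d : ℕ) (p q s : ℝ) (f : (Fin d → ℝ) → ℝ) : ℝ≥0∞ :=
  ∑' j : validJ d,
    ENNReal.ofReal ((2:ℝ) ^ ((jnorm d j.1 : ℝ) * (s - 1/p + 1) * q) *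
      (∑ m ∈ Dfin d j.1, |haarCoeff d f j.1 m| ^ p) ^ (q / p))

/-- Coordinate of the `k`-th point of a digital net with `q × n` generating matrix `C`. -/
def netCoord (q n : ℕ) (C : ℕ → ℕ → ZMod 2) (k : ℕ) : ℝ :=
  ∑ i ∈ Finset.range q,
    ((∑ ℓ ∈ Finset.range n, C i ℓ * (if k.testBit ℓ then 1 else 0)).val : ℝ) / 2 ^ (i + 1)

/-- `n_{μ+1}`, with the convention `n_{r+1} = log₂ N` (indices `1`-based, `n` stored `0`-based). -/
def nExt (r : ℕ) (n : Fin r → ℕ) (N : ℕ) (μ : ℕ) : ℝ :=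
  if h : μ < r then (n ⟨μ, h⟩ : ℝ) else Real.logb 2 N

/-- `n_μ`, with the convention `n_0 = 0` (indices `1`-based, `n` stored `0`-based). -/
def nPrev (r : ℕ) (n : Fin r → ℕ) (μ : ℕ) : ℝ :=
  if h : 1 ≤ μ ∧ μ ≤ r then (n ⟨μ - 1, by omega⟩ : ℝ) else 0

/-- The dyadic square function `Sf`, valued in `ℝ≥0∞`. -/
def sqFnE (d : ℕ) (f : (Fin d → ℝ) → ℝ) (x : Fin d → ℝ) : ℝ≥0∞ :=
  (∑' j : validJ d, ∑ m ∈ Dfin d j.1,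
    ENNReal.ofReal ((2:ℝ) ^ (2 * jnorm d j.1) * (haarCoeff d f j.1 m)^2 *
      (dyadicBox d j.1 m).indicator (fun _ => (1:ℝ)) x)) ^ (1/2 : ℝ)

/-- `sup_{p > 1} p^{-1/β} ‖f‖_{L_p([0,1]^d)}`. -/
def supLp (d : ℕ) (β : ℝ) (f : (Fin d → ℝ) → ℝ) : ℝ≥0∞ :=
  ⨆ p : {p : ℝ // 1 < p},
    ENNReal.ofReal ((p:ℝ) ^ (-(1/β))) * eLpNorm f (ENNReal.ofReal (p:ℝ)) (volume.restrict (unitCube d))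

/-- `‖f | 𝒟₀^d‖² = ∑_{j ∈ ℕ₀^d} 2^{|j|} ∑_{m ∈ 𝔻_j} ⟨f,h_{j,m}⟩²`. -/
def dNormSq (d : ℕ) (f : (Fin d → ℝ) → ℝ) : ℝ≥0∞ :=
  ∑' j : Fin d → ℕ, ∑ m ∈ Dfin0 d j,
    ENNReal.ofReal ((2:ℝ) ^ (∑ i, j i) * (haarCoeff d f (fun i => (j i : ℤ)) m)^2)

/-- `‖f | 𝒟₀^d‖`. -/
def dNorm (d : ℕ) (f : (Fin d → ℝ) → ℝ) : ℝ≥0∞ := (dNormSq d f) ^ (1/2 : ℝ)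

/-!
The points with index below `2 ^ n` that fall into a given dyadic box share their leading digits,
so their index digits solve one linear system over `𝔽₂`. The rows of this system are leading rows
of the generating matrices, which the order `α` net property makes linearly independent as soon as
`α * |j| + t ≤ α * n`; hence every box contains at most `2 ^ (n - |j|)` of these points.

The Haar coefficient of the discrepancy function splits into products of one-dimensional
coefficients. A one-dimensional Haar function with `j ≥ 0` integrates to zero, and `I_{-1,0}`
contains all coordinates, so points outside `I_{j,m}` contribute nothing; each point inside
contributes at most `2 ^ (-|j|)`, and the volume term is at most `2 ^ (-2|j|)`. If
`|j| + t / α ≥ log₂ N`, the choice `n = |j| + ⌊t / α⌋ + 1` covers the first `N` points, so a box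
contains at most `2 * 2 ^ (t / α)` of them.
-/

open Filter Finset Matrix

section LinearSystems

variable {K ι κ : Type*} [Field K] [Fintype K] [DecidableEq K] [Fintype ι] [Fintype κ]
  [DecidableEq κ]

theorem card_filter_mulVec_eq_le {M : Matrix ι κ K} (hM : LinearIndependent K M.row) (b : ι → K) :
    #{v | M *ᵥ v = b} ≤ Fintype.card K ^ (Fintype.card κ - Fintype.card ι) := by
  obtain hempty | ⟨v₀, hv₀⟩ := (univ.filter fun v => M *ᵥ v = b).eq_empty_or_nonempty
  · simp [hempty]
  have hker : Module.finrank K M.mulVecLin.ker = Fintype.card κ - Fintype.card ι := by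
    have hrank : Module.finrank K M.mulVecLin.range = Fintype.card ι := hM.rank_matrix
    have := M.mulVecLin.finrank_range_add_finrank_ker
    rw [hrank, Module.finrank_fintype_fun_eq_card] at this
    lia
  have hfiber := Nat.card_congr (M.mulVecLin.toAddMonoidHom.fiberEquivKer v₀)
  refine le_of_eq ?_
  calc #{v | M *ᵥ v = b}
    _ = Nat.card M.mulVecLin.ker := by
        rw [← Nat.subtype_card _ fun v => by
          rw [mem_filter_univ, ← (mem_filter_univ _).1 hv₀]]
        exact hfiber
    _ = Fintype.card K ^ (Fintype.card κ - Fintype.card ι) := by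
        rw [Module.natCard_eq_pow_finrank (K := K), hker, Nat.card_eq_fintype_card]

end LinearSystems

section Digits

variable {b : ℕ}

theorem ofDigits_lt_one {a : ℕ → Fin b} {i : ℕ} (hi : (a i : ℕ) + 1 < b) :
    Real.ofDigits a < 1 := by
  have hb : 1 < b := by lia
  rw [← Real.ofDigits_const_last_eq_one' hb]
  refine Summable.tsum_lt_tsum (i := i) (fun n => ?_) ?_ Real.summable_ofDigitsTerm
    Real.summable_ofDigitsTerm
  · unfold Real.ofDigitsTerm
    gcongr
    exact Fin.le_def.2 (Nat.le_sub_one_of_lt (a n).isLt)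
  · unfold Real.ofDigitsTerm
    gcongr
    exact Fin.lt_def.2 (by simp only; lia)

theorem ofDigits_mul_base (a : ℕ → Fin b) :
    Real.ofDigits a * b = a 0 + Real.ofDigits fun i => a (i + 1) := by
  have hb : (b : ℝ) ≠ 0 := Nat.cast_ne_zero.2 (Fin.pos (a 0)).ne'
  rw [Real.ofDigits_eq_sum_add_ofDigits a 1, sum_range_one, Real.ofDigitsTerm]
  field_simp
  ring

theorem exists_ofDigits_mul_pow_succ_eq (a : ℕ → Fin b) (n : ℕ) :
    ∃ q : ℕ, Real.ofDigits a * b ^ (n + 1) =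
      (b * q + a n : ℕ) + Real.ofDigits fun i => a (i + (n + 1)) := by
  induction n with
  | zero => exact ⟨0, by simp [ofDigits_mul_base]⟩
  | succ n ih =>
    obtain ⟨q, hq⟩ := ih
    refine ⟨b * q + a n, ?_⟩
    rw [pow_succ, ← mul_assoc, hq, add_mul, ofDigits_mul_base]
    simp only [zero_add, add_assoc, add_comm 1 (n + 1)]
    push_cast
    ring

theorem digits_ofDigits [NeZero b] {a : ℕ → Fin b} (ha : ∃ᶠ i in atTop, (a i : ℕ) + 1 < b) :
    Real.digits (Real.ofDigits a) b = a := by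
  ext n
  obtain ⟨q, hq⟩ := exists_ofDigits_mul_pow_succ_eq a n
  obtain ⟨i, hni, hi⟩ := frequently_atTop.1 ha (n + 1)
  have htail : Real.ofDigits (fun i => a (i + (n + 1))) < 1 :=
    ofDigits_lt_one (i := i - (n + 1)) (by rwa [Nat.sub_add_cancel hni])
  have hfloor : ⌊Real.ofDigits a * b ^ (n + 1)⌋₊ = b * q + a n := by
    rw [hq, add_comm, Nat.floor_add_natCast (Real.ofDigits_nonneg _), Nat.floor_eq_zero.2 htail,
      zero_add]
  rw [Real.digits, hfloor, Fin.val_ofNat, Nat.mul_add_mod, Nat.mod_eq_of_lt (a n).isLt]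

theorem digits_eq_of_floor_eq [NeZero b] {x y : ℝ} {n i : ℕ}
    (hxy : ⌊x * b ^ n⌋₊ = ⌊y * b ^ n⌋₊) (hi : i < n) : Real.digits x b i = Real.digits y b i := by
  have hfloor (z : ℝ) : ⌊z * b ^ (i + 1)⌋₊ = ⌊z * b ^ n⌋₊ / b ^ (n - (i + 1)) := by
    have hb : (b : ℝ) ^ (n - (i + 1)) ≠ 0 := pow_ne_zero _ (NeZero.ne _)
    have hpow : (b : ℝ) ^ n = b ^ (i + 1) * b ^ (n - (i + 1)) := by
      rw [← pow_add, Nat.add_sub_cancel' hi]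
    rw [← Nat.floor_div_natCast, Nat.cast_pow, hpow, ← mul_assoc, mul_div_cancel_right₀ _ hb]
  simp only [Real.digits, hfloor, hxy]

end Digits

section DyadicIntervals

variable {j : ℤ} {m : ℕ} {x : ℝ}

theorem mem_dyadicI_iff :
    x ∈ dyadicI j m ↔ (m : ℝ) ≤ x * 2 ^ j.toNat ∧ x * 2 ^ j.toNat < m + 1 := by
  rw [dyadicI, Set.mem_Ico, div_le_iff₀ (by positivity), lt_div_iff₀ (by positivity)]

theorem floor_eq_of_mem_dyadicI (hx : x ∈ dyadicI j m) :
    ⌊x * 2 ^ j.toNat⌋₊ = m := by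
  obtain ⟨hle, hlt⟩ := mem_dyadicI_iff.1 hx
  exact (Nat.floor_eq_iff ((Nat.cast_nonneg m).trans hle)).2 ⟨hle, hlt⟩

theorem dyadicI_subset_Icc (hm : m < 2 ^ j.toNat) : dyadicI j m ⊆ Set.Icc 0 1 := by
  have hm' : (m : ℝ) + 1 ≤ 2 ^ j.toNat := by exact_mod_cast hm
  exact Set.Ico_subset_Icc_self.trans
    (Set.Icc_subset_Icc (by positivity) ((div_le_one (by positivity)).2 hm'))

theorem volume_real_dyadicI (j : ℤ) (m : ℕ) : volume.real (dyadicI j m) = 1 / 2 ^ j.toNat := by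
  rw [dyadicI, Real.volume_real_Ico_of_le (by gcongr; linarith)]
  ring

end DyadicIntervals

section DigitalSequences

/-- Every column of the infinite matrix `C` has only finitely many nonzero entries: the standing
assumption on the generating matrices of a digital sequence. -/
def HasFiniteColumns (C : ℕ → ℕ → ZMod 2) : Prop :=
  ∀ ℓ, ∀ᶠ k in atTop, C k ℓ = 0

/-- The digit `y_i` of point `k` of the digital sequence generated by `C`: entry `i` of the product
of `C` with the vector of binary digits of `k`. It takes values in `ZMod 2`, which unfolds to the
type `Fin 2` of binary digits in `Real.ofDigits` and `Real.digits`. -/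
def digitalDigit (C : ℕ → ℕ → ZMod 2) (k i : ℕ) : ZMod 2 :=
  ∑ ℓ ∈ range (k + 1), C i ℓ * if k.testBit ℓ then 1 else 0

/-- The vector of the `n` least significant binary digits of `k`, least significant first, on which
the generating matrices of a digital sequence act. -/
def binaryVector (n k : ℕ) : Fin n → ZMod 2 := fun ℓ => if k.testBit ℓ then 1 else 0

/-- The matrix over `𝔽₂` which stacks the first `ν i` rows of each `C i`, truncated to `n`
columns: it maps the binary digits of `k < 2 ^ n` to the leading digits of point `k`. -/
def stackedRows {d : ℕ} (C : Fin d → ℕ → ℕ → ZMod 2) (ν : Fin d → ℕ) (n : ℕ) :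
    Matrix (Σ i, Fin (ν i)) (Fin n) (ZMod 2) :=
  Matrix.of fun p ℓ => C p.1 p.2 ℓ

variable {C : ℕ → ℕ → ZMod 2} {α t d n k : ℕ} {E : Fin d → ℕ → ℕ → ZMod 2}

theorem binaryVector_injOn (n : ℕ) : Set.InjOn (binaryVector n) (Set.Iio (2 ^ n)) := by
  intro k hk k' hk' h
  refine Nat.eq_of_testBit_eq fun ℓ => ?_
  obtain hℓ | hℓ := lt_or_ge ℓ n
  · have := congrFun h ⟨ℓ, hℓ⟩
    simp only [binaryVector] at this
    grind
  · have hpow : 2 ^ n ≤ 2 ^ ℓ := Nat.pow_le_pow_right two_pos hℓ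
    rw [Nat.testBit_lt_two_pow (hk.trans_le hpow), Nat.testBit_lt_two_pow (hk'.trans_le hpow)]

theorem digitalDigit_eq_dotProduct (hk : k < 2 ^ n) (i : ℕ) :
    digitalDigit C k i = (fun ℓ : Fin n => C i ℓ) ⬝ᵥ binaryVector n k := by
  have hvanish {a ℓ : ℕ} (ha : k < 2 ^ a) (hℓ : ℓ ∉ range a) :
      C i ℓ * (if k.testBit ℓ then 1 else 0) = 0 := by
    rw [mem_range, not_lt] at hℓ
    simp [Nat.testBit_lt_two_pow (ha.trans_le (Nat.pow_le_pow_right two_pos hℓ))]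
  have hk' : k < 2 ^ (k + 1) := k.lt_succ_self.trans Nat.lt_two_pow_self
  calc digitalDigit C k i
    _ = ∑ ℓ ∈ range (max (k + 1) n), C i ℓ * if k.testBit ℓ then 1 else 0 :=
        sum_subset (range_mono (le_max_left _ _)) fun _ _ => hvanish hk'
    _ = ∑ ℓ ∈ range n, C i ℓ * if k.testBit ℓ then 1 else 0 :=
        (sum_subset (range_mono (le_max_right _ _)) fun _ _ => hvanish hk).symm
    _ = _ := sum_range _

theorem digitalCoord_eq_ofDigits (C : ℕ → ℕ → ZMod 2) (k : ℕ) :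
    digitalCoord C k = Real.ofDigits (b := 2) (digitalDigit C k) := by
  simp only [digitalCoord, div_eq_mul_inv]
  rfl

theorem digitalSeq_nonneg (E : Fin d → ℕ → ℕ → ZMod 2) (k : ℕ) (i : Fin d) :
    0 ≤ digitalSeq d E k i := by
  rw [digitalSeq, digitalCoord_eq_ofDigits]
  exact Real.ofDigits_nonneg _

theorem HasFiniteColumns.digits_digitalCoord (hC : HasFiniteColumns C) (k : ℕ) :
    Real.digits (digitalCoord C k) 2 = digitalDigit C k := by
  have hzero : ∀ᶠ i in atTop, digitalDigit C k i = 0 := by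
    filter_upwards [(eventually_all_finset (range (k + 1))).2 fun ℓ _ => hC ℓ] with i hi
    exact sum_eq_zero fun ℓ hℓ => by rw [hi ℓ hℓ, zero_mul]
  rw [digitalCoord_eq_ofDigits]
  refine digits_ofDigits (hzero.mono fun i hi => ?_).frequently
  rw [hi]
  decide

theorem Triangular2.hasFiniteColumns (hE : Triangular2 d E) (i : Fin d) :
    HasFiniteColumns (E i) := fun ℓ =>
  (eventually_ge_atTop (2 * (ℓ + 1))).mono fun k hk => hE i k ℓ (by lia)

theorem IsOrderSeq.linearIndependent_stackedRows (hα : 0 < α) (hE : IsOrderSeq α t d E)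
    {ν : Fin d → ℕ} (hn : t < α * n) (hν : α * ∑ i, ν i + t ≤ α * n) :
    LinearIndependent (ZMod 2) (stackedRows E ν n).row := by
  have hanti (i : Fin d) : StrictAnti fun l : Fin (ν i) => (l.rev : ℕ) :=
    fun l l' h => Fin.rev_strictAnti h
  have hlt (i : Fin d) (l : Fin (ν i)) : (l.rev : ℕ) < α * n := by
    have hνi : ν i ≤ ∑ i, ν i := single_le_sum_of_canonicallyOrdered (mem_univ i)
    nlinarith [l.rev.isLt]
  -- Only the `α` largest row indices of each matrix are charged, and each is at most `ν i`.
  have hsum (i : Fin d) :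
      ∑ l ∈ univ.filter (fun l : Fin (ν i) => (l : ℕ) < α), ((l.rev : ℕ) + 1) ≤ α * ν i := by
    have hcard : #(univ.filter fun l : Fin (ν i) => (l : ℕ) < α) ≤ α := by
      simpa using card_le_card_of_injOn (t := range α) Fin.val (fun l hl => by simpa using hl)
        Fin.val_injective.injOn
    exact (sum_le_card_nsmul _ _ _ fun l _ => l.rev.isLt).trans (Nat.mul_le_mul_right _ hcard)
  have hrev := hE n hn ν (fun i l => l.rev) hanti hlt <| by
    have := sum_le_sum fun i (_ : i ∈ univ) => hsum i
    rw [← mul_sum] at this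
    lia
  -- The net property lists the rows of each matrix in decreasing order.
  have hrow : (stackedRows E ν n).row = (fun (p : Σ i, Fin (ν i)) (ℓ : Fin n) =>
      E p.1 p.2.rev ℓ) ∘ Sigma.map id fun _ => Fin.rev := by
    funext p ℓ
    simp [stackedRows, Matrix.row, Sigma.map, -Fin.val_rev]
  rw [hrow]
  exact hrev.comp _ (Function.injective_id.sigma_map fun _ => Fin.rev_injective)

theorem stackedRows_mulVec_binaryVector_apply (hk : k < 2 ^ n) {ν : Fin d → ℕ}
    (p : Σ i, Fin (ν i)) :
    (stackedRows E ν n *ᵥ binaryVector n k) p = digitalDigit (E p.1) k p.2 :=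
  (digitalDigit_eq_dotProduct hk _).symm

theorem stackedRows_mulVec_eq_of_mem_dyadicBox (hfin : ∀ i, HasFiniteColumns (E i))
    {j : Fin d → ℤ} {m : Fin d → ℕ} {k' : ℕ} (hk : k < 2 ^ n) (hk' : k' < 2 ^ n)
    (hmem : digitalSeq d E k ∈ dyadicBox d j m) (hmem' : digitalSeq d E k' ∈ dyadicBox d j m) :
    stackedRows E (fun i => (j i).toNat) n *ᵥ binaryVector n k =
      stackedRows E (fun i => (j i).toNat) n *ᵥ binaryVector n k' := by
  funext ⟨i, l⟩
  have hfloor := (floor_eq_of_mem_dyadicI (hmem i (Set.mem_univ i))).trans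
    (floor_eq_of_mem_dyadicI (hmem' i (Set.mem_univ i))).symm
  have hdigits := digits_eq_of_floor_eq (b := 2) (by exact_mod_cast hfloor) l.isLt
  rw [stackedRows_mulVec_binaryVector_apply hk, stackedRows_mulVec_binaryVector_apply hk',
    ← (hfin i).digits_digitalCoord, ← (hfin i).digits_digitalCoord]
  exact hdigits

open scoped Classical in
theorem IsOrderSeq.card_filter_mem_dyadicBox_le (hα : 0 < α) (hE : IsOrderSeq α t d E)
    (hfin : ∀ i, HasFiniteColumns (E i)) {j : Fin d → ℤ} (hn : t < α * n)
    (hj : α * jnorm d j + t ≤ α * n) (m : Fin d → ℕ) :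
    #{k ∈ range (2 ^ n) | digitalSeq d E k ∈ dyadicBox d j m} ≤ 2 ^ (n - jnorm d j) := by
  obtain hempty | ⟨k₀, hk₀⟩ :=
    ({k ∈ range (2 ^ n) | digitalSeq d E k ∈ dyadicBox d j m}).eq_empty_or_nonempty
  · simp [hempty]
  have hcard := card_filter_mulVec_eq_le (hE.linearIndependent_stackedRows hα hn hj)
    (stackedRows E (fun i => (j i).toNat) n *ᵥ binaryVector n k₀)
  simp only [ZMod.card, Fintype.card_fin, Fintype.card_sigma] at hcard
  simp only [mem_filter, mem_range] at hk₀
  refine (card_le_card_of_injOn (binaryVector n) (fun k hk => ?_) ?_).trans hcard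
  · simp only [coe_filter, mem_range, Set.mem_ofPred_eq] at hk
    simpa using stackedRows_mulVec_eq_of_mem_dyadicBox hfin hk.1 hk₀.1 hk.2 hk₀.2
  · exact (binaryVector_injOn n).mono fun k hk => by simp_all

end DigitalSequences

section HaarCoefficients

/-- The Haar coefficient `⟨g, h_{j,m}⟩` of a function `g` of one variable, the case `d = 1` of
`haarCoeff`; the Haar coefficients of a tensor product are products of these. -/
def haarCoeff1 (g : ℝ → ℝ) (j : ℤ) (m : ℕ) : ℝ :=
  ∫ x in Set.Icc 0 1, g x * haar1 j m x

variable {g : ℝ → ℝ} {j : ℤ} {m : ℕ} {c ε z : ℝ}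

theorem haar1_neg_one (m : ℕ) : haar1 (-1) m = (Set.Ico 0 1).indicator 1 := by
  ext x
  simp [haar1, Set.indicator_apply]

theorem haar1_eq_indicator_sub (hj : j ≠ -1) (m : ℕ) : haar1 j m =
    (Set.Ico (m / 2 ^ j.toNat : ℝ) ((m + 1 / 2) / 2 ^ j.toNat)).indicator 1 -
      (Set.Ico ((m + 1 / 2) / 2 ^ j.toNat : ℝ) ((m + 1) / 2 ^ j.toNat)).indicator 1 := by
  ext x
  simp only [haar1, hj, if_false, Pi.sub_apply, Set.indicator_apply, Set.mem_Ico, Pi.one_apply]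
  grind

theorem measurable_haar1 (j : ℤ) (m : ℕ) : Measurable (haar1 j m) := by
  obtain rfl | hj := eq_or_ne j (-1)
  · rw [haar1_neg_one]
    exact measurable_one.indicator measurableSet_Ico
  · rw [haar1_eq_indicator_sub hj]
    exact (measurable_one.indicator measurableSet_Ico).sub
      (measurable_one.indicator measurableSet_Ico)

theorem abs_haar1_le_one (j : ℤ) (m : ℕ) (x : ℝ) : |haar1 j m x| ≤ 1 := by
  unfold haar1
  split_ifs <;> simp

theorem haar1_of_notMem_dyadicI (hm : m < 2 ^ j.toNat) {x : ℝ} (hx : x ∉ dyadicI j m) :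
    haar1 j m x = 0 := by
  obtain rfl | hj := eq_or_ne j (-1)
  · obtain rfl : m = 0 := by simpa using hm
    rw [haar1_neg_one]
    exact Set.indicator_of_notMem (by simpa [dyadicI] using hx) _
  · have hleft : (m / 2 ^ j.toNat : ℝ) ≤ (m + 1 / 2) / 2 ^ j.toNat := by gcongr; norm_num
    have hright : ((m + 1 / 2) / 2 ^ j.toNat : ℝ) ≤ (m + 1) / 2 ^ j.toNat := by gcongr; norm_num
    rw [haar1_eq_indicator_sub hj, Pi.sub_apply,
      Set.indicator_of_notMem fun h => hx (Set.Ico_subset_Ico_right hright h),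
      Set.indicator_of_notMem fun h => hx (Set.Ico_subset_Ico_left hleft h), sub_zero]

theorem setIntegral_haar1 (hj : j ≠ -1) (hm : m < 2 ^ j.toNat) :
    ∫ x in Set.Icc 0 1, haar1 j m x = 0 := by
  have hleft : (m / 2 ^ j.toNat : ℝ) ≤ (m + 1 / 2) / 2 ^ j.toNat := by gcongr; norm_num
  have hright : ((m + 1 / 2) / 2 ^ j.toNat : ℝ) ≤ (m + 1) / 2 ^ j.toNat := by gcongr; norm_num
  rw [setIntegral_eq_integral_of_forall_compl_eq_zero fun x hx =>
    haar1_of_notMem_dyadicI hm fun h => hx (dyadicI_subset_Icc hm h), haar1_eq_indicator_sub hj]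
  simp only [Pi.sub_apply]
  rw [integral_sub ((integrableOn_const (by simp)).integrable_indicator measurableSet_Ico)
    ((integrableOn_const (by simp)).integrable_indicator measurableSet_Ico),
    integral_indicator_one measurableSet_Ico, integral_indicator_one measurableSet_Ico,
    Real.volume_real_Ico_of_le hleft, Real.volume_real_Ico_of_le hright]
  ring

theorem integrableOn_mul_haar1 (hg : IntegrableOn g (Set.Icc 0 1)) (j : ℤ) (m : ℕ) :
    IntegrableOn (fun x => g x * haar1 j m x) (Set.Icc 0 1) :=
  Integrable.mul_bdd hg (measurable_haar1 j m).aestronglyMeasurable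
    (Eventually.of_forall (abs_haar1_le_one j m))

theorem abs_haarCoeff1_le_of_abs_le (hm : m < 2 ^ j.toNat) (hg : ∀ x ∈ dyadicI j m, |g x| ≤ ε) :
    |haarCoeff1 g j m| ≤ ε / 2 ^ j.toNat := by
  have hbound (x : ℝ) (hx : x ∈ dyadicI j m) : ‖g x * haar1 j m x‖ ≤ ε := by
    rw [Real.norm_eq_abs, abs_mul]
    exact (mul_le_of_le_one_right (abs_nonneg _) (abs_haar1_le_one j m x)).trans (hg x hx)
  have hfinite : volume (dyadicI j m) < ⊤ := measure_Ico_lt_top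
  rw [haarCoeff1, setIntegral_eq_of_subset_of_forall_sdiff_eq_zero measurableSet_Icc
    (dyadicI_subset_Icc hm) fun x hx => by rw [haar1_of_notMem_dyadicI hm hx.2, mul_zero]]
  exact (norm_setIntegral_le_of_norm_le_const hfinite hbound).trans_eq
    (by rw [volume_real_dyadicI, mul_one_div])

theorem abs_haarCoeff1_le_of_abs_sub_le (hj : j ≠ -1) (hm : m < 2 ^ j.toNat)
    (hg : IntegrableOn g (Set.Icc 0 1)) (hgc : ∀ x ∈ dyadicI j m, |g x - c| ≤ ε) :
    |haarCoeff1 g j m| ≤ ε / 2 ^ j.toNat := by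
  have hsub : haarCoeff1 (fun x => g x - c) j m = haarCoeff1 g j m := by
    simp only [haarCoeff1, sub_mul]
    rw [integral_sub (integrableOn_mul_haar1 hg j m)
      (integrableOn_mul_haar1 (integrableOn_const (by simp)) j m), integral_const_mul,
      setIntegral_haar1 hj hm, mul_zero, sub_zero]
  exact hsub ▸ abs_haarCoeff1_le_of_abs_le hm hgc

theorem abs_haarCoeff1_id_le (hm : m < 2 ^ j.toNat) :
    |haarCoeff1 (fun x => x) j m| ≤ 1 / 2 ^ (2 * j.toNat) := by
  obtain rfl | hj := eq_or_ne j (-1)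
  · have habs (x : ℝ) (hx : x ∈ dyadicI (-1) m) : |x| ≤ 1 := by
      have := dyadicI_subset_Icc hm hx
      exact abs_le.2 ⟨neg_one_lt_zero.le.trans this.1, this.2⟩
    simpa using abs_haarCoeff1_le_of_abs_le hm habs
  have hdist (x : ℝ) (hx : x ∈ dyadicI j m) : |x - m / 2 ^ j.toNat| ≤ 1 / 2 ^ j.toNat := by
    rw [abs_of_nonneg (sub_nonneg.2 hx.1), sub_le_iff_le_add, ← add_div, add_comm 1]
    exact hx.2.le
  exact (abs_haarCoeff1_le_of_abs_sub_le hj hm continuousOn_id.integrableOn_Icc hdist).trans_eq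
    (by rw [div_div, ← pow_add, two_mul])

theorem integrableOn_indicator_Ioi (z : ℝ) :
    IntegrableOn ((Set.Ioi z).indicator (1 : ℝ → ℝ)) (Set.Icc 0 1) :=
  (integrableOn_const (by simp)).indicator measurableSet_Ioi

theorem abs_haarCoeff1_indicator_Ioi_le (hm : m < 2 ^ j.toNat) (z : ℝ) :
    |haarCoeff1 ((Set.Ioi z).indicator 1) j m| ≤ 1 / 2 ^ j.toNat :=
  abs_haarCoeff1_le_of_abs_le hm fun x _ => by
    by_cases hx : x ∈ Set.Ioi z <;> simp [hx]

theorem haarCoeff1_indicator_Ioi_of_notMem (hm : m < 2 ^ j.toNat) (hz : 0 ≤ z)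
    (hzm : z ∉ dyadicI j m) : haarCoeff1 ((Set.Ioi z).indicator 1) j m = 0 := by
  rw [dyadicI, Set.mem_Ico, not_and, not_lt] at hzm
  rw [← abs_nonpos_iff, ← zero_div ((2 : ℝ) ^ j.toNat)]
  obtain hleft | hright := lt_or_ge z (m / 2 ^ j.toNat)
  · have hj : j ≠ -1 := by
      rintro rfl
      obtain rfl : m = 0 := by simpa using hm
      simp at hleft
      linarith
    refine abs_haarCoeff1_le_of_abs_sub_le (c := 1) hj hm (integrableOn_indicator_Ioi z)
      fun x hx => ?_
    simp [Set.indicator_of_mem (show x ∈ Set.Ioi z from hleft.trans_le hx.1)]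
  · refine abs_haarCoeff1_le_of_abs_le hm fun x hx => ?_
    simp [Set.indicator_of_notMem (show x ∉ Set.Ioi z from (hx.2.trans_le (hzm hright)).not_gt)]

end HaarCoefficients

section TensorProducts

variable {d : ℕ} {g : Fin d → ℝ → ℝ} {S : ℕ → Fin d → ℝ} {j : Fin d → ℤ} {m : Fin d → ℕ}

theorem restrict_unitCube (d : ℕ) : volume.restrict (unitCube d) =
    Measure.pi fun _ : Fin d => volume.restrict (Set.Icc (0 : ℝ) 1) := by
  rw [unitCube, volume_pi, Measure.restrict_pi_pi]

theorem haarCoeff_prod (g : Fin d → ℝ → ℝ) (j : Fin d → ℤ) (m : Fin d → ℕ) :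
    haarCoeff d (fun x => ∏ i, g i (x i)) j m = ∏ i, haarCoeff1 (g i) (j i) (m i) := by
  simp only [haarCoeff, haarFn, ← prod_mul_distrib, restrict_unitCube]
  exact integral_fintype_prod_eq_prod fun i x => g i x * haar1 (j i) (m i) x

theorem integrableOn_prod_mul_haarFn (hg : ∀ i, IntegrableOn (g i) (Set.Icc 0 1))
    (j : Fin d → ℤ) (m : Fin d → ℕ) :
    IntegrableOn (fun x => (∏ i, g i (x i)) * haarFn d j m x) (unitCube d) := by
  simp only [haarFn, ← prod_mul_distrib, IntegrableOn, restrict_unitCube]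
  exact Integrable.fintype_prod fun i => integrableOn_mul_haar1 (hg i) (j i) (m i)

theorem discSeq_eq_sum_prod_indicator (S : ℕ → Fin d → ℝ) (N : ℕ) (x : Fin d → ℝ) :
    discSeq d S N x =
      (∑ k ∈ range N, ∏ i, (Set.Ioi (S k i)).indicator 1 (x i)) / N - ∏ i, x i := by
  classical
  have hprod (k : ℕ) : ∏ i, (Set.Ioi (S k i)).indicator 1 (x i) =
      if ∀ i, S k i < x i then (1 : ℝ) else 0 := by
    simp [Set.indicator_apply, prod_ite_zero]
  simp only [discSeq, hprod]
  rw [Nat.card_eq_fintype_card, Fintype.card_subtype, sum_range, natCast_card_filter]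

theorem haarCoeff_discSeq (S : ℕ → Fin d → ℝ) (N : ℕ) (j : Fin d → ℤ) (m : Fin d → ℕ) :
    haarCoeff d (discSeq d S N) j m =
      (∑ k ∈ range N, ∏ i, haarCoeff1 ((Set.Ioi (S k i)).indicator 1) (j i) (m i)) / N -
        ∏ i, haarCoeff1 (fun x => x) (j i) (m i) := by
  have hpoint (k : ℕ) := integrableOn_prod_mul_haarFn
    (fun i => integrableOn_indicator_Ioi (S k i)) j m
  have hvolume := integrableOn_prod_mul_haarFn (g := fun _ x => x)
    (fun _ => continuousOn_id.integrableOn_Icc) j m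
  simp only [← haarCoeff_prod]
  simp only [haarCoeff, discSeq_eq_sum_prod_indicator, sub_mul, div_mul_eq_mul_div, sum_mul]
  rw [integral_sub ((integrable_finsetSum _ fun k _ => hpoint k).div_const _) hvolume,
    integral_div, integral_finsetSum _ fun k _ => hpoint k]

theorem abs_prod_le_one_div_two_pow_jnorm {f : Fin d → ℝ} {a : ℕ}
    (hf : ∀ i, |f i| ≤ 1 / 2 ^ (a * (j i).toNat)) : |∏ i, f i| ≤ 1 / 2 ^ (a * jnorm d j) := by
  rw [abs_prod]
  refine (prod_le_prod (fun i _ => abs_nonneg _) fun i _ => hf i).trans_eq ?_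
  rw [prod_div_distrib, prod_pow_eq_pow_sum, ← mul_sum, prod_const_one, jnorm]

open scoped Classical in
theorem abs_haarCoeff_discSeq_le (hS : ∀ k i, 0 ≤ S k i) (hm : ∀ i, m i < 2 ^ (j i).toNat)
    (N : ℕ) :
    |haarCoeff d (discSeq d S N) j m| ≤
      #{k ∈ range N | S k ∈ dyadicBox d j m} / N / 2 ^ jnorm d j + 1 / 2 ^ (2 * jnorm d j) := by
  set a : ℕ → ℝ := fun k => ∏ i, haarCoeff1 ((Set.Ioi (S k i)).indicator 1) (j i) (m i)
  have hzero (k : ℕ) (hk : S k ∉ dyadicBox d j m) : a k = 0 := by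
    simp only [dyadicBox, Set.mem_univ_pi, not_forall] at hk
    obtain ⟨i, hi⟩ := hk
    exact prod_eq_zero (mem_univ i) (haarCoeff1_indicator_Ioi_of_notMem (hm i) (hS k i) hi)
  have hle (k : ℕ) : |a k| ≤ 1 / 2 ^ jnorm d j := by
    simpa using abs_prod_le_one_div_two_pow_jnorm (a := 1) fun i => by
      simpa using abs_haarCoeff1_indicator_Ioi_le (hm i) (S k i)
  have hsum : |∑ k ∈ range N, a k| ≤
      #{k ∈ range N | S k ∈ dyadicBox d j m} / 2 ^ jnorm d j := by
    rw [← sum_filter_of_ne fun k _ hk => not_imp_comm.1 (hzero k) hk]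
    exact (abs_sum_le_sum_abs _ _).trans
      ((sum_le_card_nsmul _ _ _ fun k _ => hle k).trans_eq (by rw [nsmul_eq_mul, mul_one_div]))
  rw [haarCoeff_discSeq]
  refine (abs_sub _ _).trans (add_le_add ?_ ?_)
  · rw [abs_div, Nat.abs_cast, div_right_comm]
    gcongr
  · exact abs_prod_le_one_div_two_pow_jnorm fun i => abs_haarCoeff1_id_le (hm i)

end TensorProducts

section SmallIntervals

variable {α t d N : ℕ} {E : Fin d → ℕ → ℕ → ZMod 2}

theorem two_pow_jnorm_le_card_forall_notMem_dyadicBox_add (S : ℕ → Fin d → ℝ) (N : ℕ)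
    (j : Fin d → ℤ) :
    2 ^ jnorm d j ≤ Nat.card {m : Fin d → ℕ // (∀ i, m i < 2 ^ (j i).toNat) ∧
      ∀ k < N, S k ∉ dyadicBox d j m} + N := by
  classical
  have hoccupied : #{m ∈ Dfin d j | ¬∀ k < N, S k ∉ dyadicBox d j m} ≤ N := by
    have hsub : {m ∈ Dfin d j | ¬∀ k < N, S k ∉ dyadicBox d j m} ⊆
        (range N).image fun k i => ⌊S k i * 2 ^ (j i).toNat⌋₊ := by
      intro m hm
      obtain ⟨k, hk, hkm⟩ : ∃ k < N, S k ∈ dyadicBox d j m := by simpa using (mem_filter.1 hm).2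
      exact mem_image.2 ⟨k, mem_range.2 hk,
        funext fun i => floor_eq_of_mem_dyadicI (hkm i (Set.mem_univ i))⟩
    exact (card_le_card hsub).trans (card_image_le.trans_eq (card_range N))
  have hcard : #(Dfin d j) = 2 ^ jnorm d j := by
    simp [Dfin, jnorm, prod_pow_eq_pow_sum]
  rw [Nat.subtype_card {m ∈ Dfin d j | ∀ k < N, S k ∉ dyadicBox d j m} fun m => by simp [Dfin],
    ← hcard, ← card_filter_add_card_filter_not fun m => ∀ k < N, S k ∉ dyadicBox d j m]
  gcongr

open scoped Classical in
theorem IsOrderSeq.card_filter_range_mem_dyadicBox_le (hα : 0 < α) (hE : IsOrderSeq α t d E)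
    (hfin : ∀ i, HasFiniteColumns (E i)) {j : Fin d → ℤ}
    (hN : (N : ℝ) ≤ 2 ^ jnorm d j * 2 ^ (t / α : ℝ)) (m : Fin d → ℕ) :
    (#{k ∈ range N | digitalSeq d E k ∈ dyadicBox d j m} : ℝ) ≤ 2 * 2 ^ (t / α : ℝ) := by
  have ht : t < α * (t / α + 1) := Nat.lt_mul_div_succ t hα
  have hquot : (t / α : ℝ) ≤ (t / α + 1 : ℕ) := by
    rw [div_le_iff₀' (Nat.cast_pos.2 hα)]
    exact_mod_cast ht.le
  have hNpow : N ≤ 2 ^ (jnorm d j + (t / α + 1)) := by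
    rw [← Nat.cast_le (α := ℝ), Nat.cast_pow, Nat.cast_two, pow_add]
    refine hN.trans ?_
    rw [← Real.rpow_natCast 2 (t / α + 1)]
    gcongr
    norm_num
  have hcount : #{k ∈ range N | digitalSeq d E k ∈ dyadicBox d j m} ≤ 2 ^ (t / α + 1) := by
    refine (card_le_card (filter_subset_filter _ (range_mono hNpow))).trans ?_
    refine (hE.card_filter_mem_dyadicBox_le hα hfin ?_ ?_ m).trans_eq
      (by rw [Nat.add_sub_cancel_left]) <;> rw [mul_add] <;> lia
  calc (#{k ∈ range N | digitalSeq d E k ∈ dyadicBox d j m} : ℝ)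
    _ ≤ 2 ^ (t / α + 1) := by exact_mod_cast hcount
    _ = 2 * 2 ^ ((t / α : ℕ) : ℝ) := by rw [pow_succ', Real.rpow_natCast]
    _ ≤ 2 * 2 ^ (t / α : ℝ) := by
        gcongr
        · norm_num
        · exact Nat.cast_div_le

theorem haar_coeff_small_intervals_general (hα : 0 < α) (hE : IsOrderSeq α t d E)
    (hfin : ∀ i, HasFiniteColumns (E i)) (hN : 0 < N) (j : validJ d)
    (hlog : Real.logb 2 N ≤ jnorm d j + (t : ℝ) / α) :
    (∀ m : Fin d → ℕ, (∀ i, m i < 2 ^ (j.1 i).toNat) →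
      |haarCoeff d (discSeq d (digitalSeq d E) N) j m| ≤
        3 * 2 ^ ((t : ℝ) / α) / N / 2 ^ jnorm d j) ∧
    2 ^ jnorm d j ≤ Nat.card {m : Fin d → ℕ // (∀ i, m i < 2 ^ (j.1 i).toNat) ∧
      ∀ k < N, digitalSeq d E k ∉ dyadicBox d j m} + N ∧
    (∀ m : Fin d → ℕ, (∀ i, m i < 2 ^ (j.1 i).toNat) →
      (∀ k < N, digitalSeq d E k ∉ dyadicBox d j m) →
      |haarCoeff d (discSeq d (digitalSeq d E) N) j m| ≤ 1 / 2 ^ (2 * jnorm d j)) := by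
  classical
  have hN₀ : (0 : ℝ) < N := Nat.cast_pos.2 hN
  have hN₂ : (N : ℝ) ≤ 2 ^ jnorm d j * 2 ^ ((t : ℝ) / α) := by
    rwa [Real.logb_le_iff_le_rpow one_lt_two hN₀, Real.rpow_add two_pos,
      Real.rpow_natCast] at hlog
  have hcoeff {m : Fin d → ℕ} (hm : ∀ i, m i < 2 ^ (j.1 i).toNat) :=
    abs_haarCoeff_discSeq_le (digitalSeq_nonneg E) hm N
  refine ⟨fun m hm => (hcoeff hm).trans ?_,
    two_pow_jnorm_le_card_forall_notMem_dyadicBox_add (digitalSeq d E) N j.1, fun m hm hempty => ?_⟩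
  · have hvolume : (1 : ℝ) / 2 ^ (2 * jnorm d j) ≤ 2 ^ ((t : ℝ) / α) / N / 2 ^ jnorm d j := by
      rw [two_mul, pow_add, ← div_div]
      refine div_le_div_of_nonneg_right ?_ (by positivity)
      rwa [div_le_div_iff₀ (by positivity) hN₀, one_mul, mul_comm]
    calc _ ≤ (2 * 2 ^ ((t : ℝ) / α) / N / 2 ^ jnorm d j +
          2 ^ ((t : ℝ) / α) / N / 2 ^ jnorm d j : ℝ) := by
          gcongr
          exact hE.card_filter_range_mem_dyadicBox_le hα hfin hN₂ m
      _ = _ := by ring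
  · have hnone : #{k ∈ range N | digitalSeq d E k ∈ dyadicBox d j m} = 0 := by
      simpa [filter_eq_empty_iff] using hempty
    simpa [hnone] using hcoeff hm

end SmallIntervals

/-- Haar coefficient bounds for small dyadic intervals
(`|j| + t/2 ≥ log₂ N`) of an order `2` digital `(t,d)`-sequence with triangular generating
matrices: (a) if `I_{j,m}` contains points of the first `N` points,
`|⟨D^N,h_{j,m}⟩| ≤ C 2^{t/2} N⁻¹ 2^{-|j|}`; (b) at least `2^{|j|} - N` boxes `I_{j,m}`
contain no such point, and for those `|⟨D^N,h_{j,m}⟩| ≤ C 2^{-2|j|}`. -/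
theorem haar_coeff_small_intervals (d : ℕ) (hd : 0 < d) :
    ∃ C : ℝ, 0 < C ∧ ∀ (t : ℕ) (E : Fin d → ℕ → ℕ → ZMod 2),
      IsOrderSeq 2 t d E → Triangular2 d E →
      ∀ (N : ℕ), 2 ≤ N → ∀ (j : Fin d → ℤ), (∀ i, -1 ≤ j i) →
        Real.logb 2 N ≤ (jnorm d j : ℝ) + (t:ℝ)/2 →
        (∀ m : Fin d → ℕ, (∀ i, m i < 2 ^ (j i).toNat) →
          (∃ k < N, digitalSeq d E k ∈ dyadicBox d j m) →
          |haarCoeff d (discSeq d (digitalSeq d E) N) j m| ≤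
            C * (2:ℝ) ^ ((t:ℝ)/2) / N / 2 ^ (jnorm d j)) ∧
        ((2 ^ (jnorm d j) : ℤ) - N ≤
          (Nat.card {m : Fin d → ℕ // (∀ i, m i < 2 ^ (j i).toNat) ∧
            ∀ k < N, digitalSeq d E k ∉ dyadicBox d j m} : ℤ)) ∧
        (∀ m : Fin d → ℕ, (∀ i, m i < 2 ^ (j i).toNat) →
          (∀ k < N, digitalSeq d E k ∉ dyadicBox d j m) →
          |haarCoeff d (discSeq d (digitalSeq d E) N) j m| ≤
            C / 2 ^ (2 * jnorm d j)) := by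
  refine ⟨3, three_pos, fun t E hE hE₂ N hN j hj hlog => ?_⟩
  obtain ⟨hcoeff, hcard, hempty⟩ := haar_coeff_small_intervals_general two_pos hE
    hE₂.hasFiniteColumns (two_pos.trans_le hN) ⟨j, hj⟩ (by exact_mod_cast hlog)
  refine ⟨fun m hm _ => by exact_mod_cast hcoeff m hm, ?_,
    fun m hm hk => (hempty m hm hk).trans (by gcongr; norm_num)⟩
  rw [sub_le_iff_le_add]
  exact_mod_cast hcard

end
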